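/- arXiv:2212.14265 — 2 statements merged into one kernel-verified Lean document; each statement's English description precedes it below -/
import Mathlib

section
/- Let q₁,…,q₆ ∈ ℝ² be six points in convex position, and let G be the set of the 12 pairs of {1,…,6} other than {1,4}, {2,5}, {3,6} (the graph of an octahedron). If the three lines through q₁,q₄, through q₂,q₅ and through q₃,q₆ have a common point, then the rows of C₃(q₁,…,q₆) indexed by G form a circuit: they are linearly dependent but the rows indexed by any proper subset of G are linearly independent. If the three lines do not have a common point, then the rows indexed by G are linearly independent (and form a basis of the row space of C₃(q)). -/
open scoped BigOperators

/-- A pair `{i,j}` of distinct vertices of the `n`-gon.  Vertices `1,…,n` are represented by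
`Fin n` (vertex `i` corresponds to `i-1 : Fin n`), and a pair is recorded with its endpoints
in increasing order. -/
abbrev Pair (n : ℕ) := {p : Fin n × Fin n // p.1 < p.2}

/-- Two pairs `{i,j}` (`i<j`) and `{k,l}` (`k<l`) cross if `i<k<j<l` or `k<i<l<j`. -/
def Cross {n : ℕ} (e f : Pair n) : Prop :=
  (e.val.1 < f.val.1 ∧ f.val.1 < e.val.2 ∧ e.val.2 < f.val.2) ∨
  (f.val.1 < e.val.1 ∧ e.val.1 < f.val.2 ∧ f.val.2 < e.val.2)

/-- A set of pairs is `(k+1)`-crossing-free if it contains no `k+1` pairwise crossing pairs. -/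
def CrossingFree (n k : ℕ) (S : Set (Pair n)) : Prop :=
  ¬ ∃ C : Finset (Pair n), ↑C ⊆ S ∧ C.card = k + 1 ∧
      ∀ e ∈ C, ∀ f ∈ C, e ≠ f → Cross e f

/-- A `k`-triangulation of the `n`-gon: an inclusion-maximal `(k+1)`-crossing-free set. -/
def IsTriangulation (n k : ℕ) (T : Set (Pair n)) : Prop :=
  CrossingFree n k T ∧ ∀ S : Set (Pair n), CrossingFree n k S → T ⊆ S → S = T

/-- The length of a pair `{i,j}` with respect to the `N`-gon: `min (j-i) (N-(j-i))`. -/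
def pairLen (N : ℕ) {n : ℕ} (e : Pair n) : ℕ :=
  min ((e.val.2 : ℕ) - (e.val.1 : ℕ)) (N - ((e.val.2 : ℕ) - (e.val.1 : ℕ)))

/-- A pair is `k`-relevant in the `N`-gon if its length is at least `k+1`. -/
def Relevant (N k : ℕ) {n : ℕ} (e : Pair n) : Prop := k + 1 ≤ pairLen N e

/-- The 2×2 determinant `det (u v)` of two plane vectors. -/
def det2 (u v : ℝ × ℝ) : ℝ := u.1 * v.2 - u.2 * v.1

/-- Points in convex position, listed in counterclockwise order along their convex hull:
they are distinct and every triple `i<j<k` is positively oriented. -/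
def ConvexPosition {n : ℕ} (q : Fin n → ℝ × ℝ) : Prop :=
  Function.Injective q ∧
  ∀ i j k : Fin n, i < j → j < k → 0 < det2 (q j - q i) (q k - q i)

/-- `p` lies on the line through `a` and `b`. -/
def onLine (a b p : ℝ × ℝ) : Prop := det2 (b - a) (p - a) = 0

/-- Row of the bar-and-joint rigidity matrix `R(p)` indexed by the pair `e`:
`p_i - p_j` in block `i`, `p_j - p_i` in block `j`, zeros elsewhere. -/
def bjRow {n d : ℕ} (p : Fin n → Fin d → ℝ) (e : Pair n) : Fin n × Fin d → ℝ :=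
  fun ma =>
    if ma.1 = e.val.1 then p e.val.1 ma.2 - p e.val.2 ma.2
    else if ma.1 = e.val.2 then p e.val.2 ma.2 - p e.val.1 ma.2
    else 0

/-- Row of the hyperconnectivity matrix `H(p)` indexed by the pair `e`:
`p_j` in block `i`, `-p_i` in block `j`, zeros elsewhere. -/
def hypRow {n d : ℕ} (p : Fin n → Fin d → ℝ) (e : Pair n) : Fin n × Fin d → ℝ :=
  fun ma =>
    if ma.1 = e.val.1 then p e.val.2 ma.2
    else if ma.1 = e.val.2 then - p e.val.1 ma.2
    else 0

/-- The vector `c_{ij} = ((x_i-x_j)^{d-1}, (x_i-x_j)^{d-2}(y_i-y_j), …, (y_i-y_j)^{d-1})`. -/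
def cvec (d : ℕ) (qi qj : ℝ × ℝ) : Fin d → ℝ :=
  fun a => (qi.1 - qj.1) ^ (d - 1 - (a : ℕ)) * (qi.2 - qj.2) ^ (a : ℕ)

/-- Row of the cofactor rigidity matrix `C_d(q)` indexed by the pair `e`:
`c_{ij}` in block `i`, `-c_{ij}` in block `j`, zeros elsewhere. -/
def cofRow (d : ℕ) {n : ℕ} (q : Fin n → ℝ × ℝ) (e : Pair n) : Fin n × Fin d → ℝ :=
  fun ma =>
    if ma.1 = e.val.1 then cvec d (q e.val.1) (q e.val.2) ma.2
    else if ma.1 = e.val.2 then - cvec d (q e.val.1) (q e.val.2) ma.2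
    else 0

/-- `x_{ij} = X_i Z_j - Z_i X_j` for vectors in `ℝ³`. -/
def xQ (Qi Qj : ℝ × ℝ × ℝ) : ℝ := Qi.1 * Qj.2.2 - Qi.2.2 * Qj.1

/-- `y_{ij} = Y_i Z_j - Z_i Y_j` for vectors in `ℝ³`. -/
def yQ (Qi Qj : ℝ × ℝ × ℝ) : ℝ := Qi.2.1 * Qj.2.2 - Qi.2.2 * Qj.2.1

/-- The vector `c_{ij} = (x_{ij}^{d-1}, x_{ij}^{d-2} y_{ij}, …, y_{ij}^{d-1})`. -/
def gcvec (d : ℕ) (Qi Qj : ℝ × ℝ × ℝ) : Fin d → ℝ :=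
  fun a => (xQ Qi Qj) ^ (d - 1 - (a : ℕ)) * (yQ Qi Qj) ^ (a : ℕ)

/-- Row of the generalized cofactor rigidity matrix `C_d(Q)` for vectors in `ℝ³`. -/
def gcofRow (d : ℕ) {n : ℕ} (Q : Fin n → ℝ × ℝ × ℝ) (e : Pair n) : Fin n × Fin d → ℝ :=
  fun ma =>
    if ma.1 = e.val.1 then gcvec d (Q e.val.1) (Q e.val.2) ma.2
    else if ma.1 = e.val.2 then - gcvec d (Q e.val.1) (Q e.val.2) ma.2
    else 0

/-- The cone of all nonnegative linear combinations of `{v e : e ∈ S}`. -/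
def coneOf {n : ℕ} {V : Type*} [AddCommGroup V] [Module ℝ V]
    (v : Pair n → V) (S : Set (Pair n)) : Set V :=
  {x | ∃ c : Pair n → ℝ, (∀ e, 0 ≤ c e) ∧ (∀ e, c e ≠ 0 → e ∈ S) ∧ x = ∑ e, c e • v e}

/-- The vectors `(v e)` realize the `k`-associahedron of the `n`-gon as a complete
simplicial fan: (a) the vectors of every `k`-triangulation are linearly independent;
(b) cones of two `k`-triangulations intersect in the cone of their intersection;
(c) the union of all the cones is the linear span of all the vectors. -/
def RealizesFan (n k : ℕ) {V : Type*} [AddCommGroup V] [Module ℝ V]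
    (v : Pair n → V) : Prop :=
  (∀ T : Set (Pair n), IsTriangulation n k T →
      LinearIndependent ℝ (fun e : T => v e.val)) ∧
  (∀ T T' : Set (Pair n), IsTriangulation n k T → IsTriangulation n k T' →
      coneOf v T ∩ coneOf v T' = coneOf v (T ∩ T')) ∧
  (⋃ T ∈ {T : Set (Pair n) | IsTriangulation n k T}, coneOf v T) =
    (Submodule.span ℝ (Set.range v) : Set V)

/-- The octahedron graph: the 12 pairs of `{1,…,6}` other than `{1,4}`, `{2,5}`, `{3,6}`
(0-indexed: `(0,3)`, `(1,4)`, `(2,5)`). -/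
def G15 : Set (Pair 6) :=
  {e | e.val ≠ ((0 : Fin 6), (3 : Fin 6)) ∧ e.val ≠ ((1 : Fin 6), (4 : Fin 6)) ∧
       e.val ≠ ((2 : Fin 6), (5 : Fin 6))}

/-- Six points are in Desargues position: the lines `q₁q₄`, `q₂q₅` and `q₃q₆` are concurrent. -/
def DesarguesPos (q : Fin 6 → ℝ × ℝ) : Prop :=
  ∃ p : ℝ × ℝ, onLine (q 0) (q 3) p ∧ onLine (q 1) (q 4) p ∧ onLine (q 2) (q 5) p

/-!
Extend the coefficients of a linear relation among the rows of `G15` to a skew-symmetric function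
`W` on ordered pairs, and write `[ijk]` for the bracket of `q i`, `q j`, `q k` and `i' = i + 3` for
the vertex opposite to `i`. The relation says that at each vertex `i` the four vectors `c_ij` in
`ℝ³`, `j ≠ i, i'`, satisfy a relation with coefficients `W i j`. They have only one up to scaling,
so this means `W i j * ∏ k ≠ i, j, [ijk] = l i * [i j i']` for some number `l i`. The product is
symmetric in `i` and `j`, hence the relations correspond to the solutions `l` of
`l j * [j i j'] = - l i * [i j i']`.

As the brackets are nonzero, a solution with one zero entry is zero, so a relation that omits an
edge is trivial. A nonzero solution makes the matrix `l i * [i j i']`, `i, j < 3`, skew-symmetric of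
odd order, hence singular, and a vector in its kernel is a common point of the diagonals. Conversely
the positions of a common point on the diagonals form a solution. The common point may be at
infinity, but convex position excludes that because the diagonals cross.

Finally, quadratic forms on the space of lines of the plane give six independent vectors orthogonal
to all rows, so the row space has dimension at most `18 - 6 = 12`, the number of edges.
-/

/-- Twice the signed area of the triangle `abc`, the bracket `[a, b, c]`. -/
def orient (a b c : ℝ × ℝ) : ℝ := det2 (b - a) (c - a)

/-- General position: no three of the points are collinear. -/
def NoThreeCollinear {ι : Type*} (q : ι → ℝ × ℝ) : Prop :=
  ∀ ⦃i j k : ι⦄, i ≠ j → i ≠ k → j ≠ k → orient (q i) (q j) (q k) ≠ 0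

section Orientation

lemma orient_swap_left (a b c : ℝ × ℝ) : orient b a c = -orient a b c := by
  simp only [orient, det2, Prod.fst_sub, Prod.snd_sub]
  ring

lemma orient_swap_right (a b c : ℝ × ℝ) : orient a c b = -orient a b c := by
  simp only [orient, det2]
  ring

@[simp]
lemma orient_self_left (a b : ℝ × ℝ) : orient a a b = 0 := by simp [orient, det2]

@[simp]
lemma orient_self_right (a b : ℝ × ℝ) : orient a b b = 0 := by
  simp only [orient, det2]
  ring

lemma exists_eq_smul_of_det2_eq_zero {u v : ℝ × ℝ} (hu : u ≠ 0) (h : det2 u v = 0) :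
    ∃ t : ℝ, v = t • u := by
  have hnorm : u.1 ^ 2 + u.2 ^ 2 ≠ 0 := fun h0 =>
    hu (Prod.ext (by rw [Prod.fst_zero]; nlinarith) (by rw [Prod.snd_zero]; nlinarith))
  rw [det2] at h
  refine ⟨(u.1 * v.1 + u.2 * v.2) / (u.1 ^ 2 + u.2 ^ 2), Prod.ext ?_ ?_⟩
  · rw [Prod.smul_fst, smul_eq_mul]
    field_simp
    linear_combination -u.2 * h
  · rw [Prod.smul_snd, smul_eq_mul]
    field_simp
    linear_combination u.1 * h

lemma eq_zero_of_det2_eq_zero {u₁ u₂ v : ℝ × ℝ} (hu : det2 u₁ u₂ ≠ 0) (h₁ : det2 u₁ v = 0)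
    (h₂ : det2 u₂ v = 0) : v = 0 := by
  simp only [det2] at hu h₁ h₂
  refine Prod.ext (mul_left_cancel₀ hu ?_) (mul_left_cancel₀ hu ?_)
  · simp only [Prod.fst_zero]
    linear_combination u₂.1 * h₁ - u₁.1 * h₂
  · simp only [Prod.snd_zero]
    linear_combination u₂.2 * h₁ - u₁.2 * h₂

lemma ConvexPosition.noThreeCollinear {n : ℕ} {q : Fin n → ℝ × ℝ} (hq : ConvexPosition q) :
    NoThreeCollinear q := by
  have hpos : ∀ {i j k}, i < j → j < k → orient (q i) (q j) (q k) ≠ 0 :=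
    fun hij hjk => (hq.2 _ _ _ hij hjk).ne'
  intro i j k hij hik hjk
  wlog hlt : i < j generalizing i j
  · rw [orient_swap_left, neg_ne_zero]
    exact this hij.symm hjk hik (hij.lt_or_gt.resolve_left hlt)
  rcases hjk.lt_or_gt with hjk | hkj
  · exact hpos hlt hjk
  rw [orient_swap_right, neg_ne_zero]
  rcases hik.lt_or_gt with hik | hki
  · exact hpos hik hkj
  · rw [orient_swap_left, neg_ne_zero]
    exact hpos hki hlt

end Orientation

section CofactorRows

variable {n d : ℕ} (q : Fin n → ℝ × ℝ)

lemma cvec_comm (hd : Odd d) (a b : ℝ × ℝ) : cvec d a b = cvec d b a := by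
  funext c
  have heven : Even (d - 1 - (c : ℕ) + c) := by
    rw [Nat.sub_add_cancel (by omega)]
    exact hd.tsub_odd odd_one
  simp only [cvec]
  rw [← neg_sub a.1, ← neg_sub a.2, neg_pow, neg_pow (a.2 - b.2), mul_mul_mul_comm, ← pow_add,
    heven.neg_one_pow, one_mul]

lemma cofRow_apply (e : Pair n) (i : Fin n) (c : Fin d) :
    cofRow d q e (i, c) = (if i = e.1.1 then cvec d (q e.1.1) (q e.1.2) c else 0) -
      (if i = e.1.2 then cvec d (q e.1.1) (q e.1.2) c else 0) := by
  have hne := e.2.ne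
  unfold cofRow
  split_ifs <;> simp_all

lemma cofRow_dotProduct (e : Pair n) (m : Fin n × Fin d → ℝ) :
    cofRow d q e ⬝ᵥ m =
      ∑ c, cvec d (q e.1.1) (q e.1.2) c * (m (e.1.1, c) - m (e.1.2, c)) := by
  rw [dotProduct, Fintype.sum_prod_type_right]
  refine Finset.sum_congr rfl fun c _ => ?_
  simp only [cofRow_apply, sub_mul, Finset.sum_sub_distrib, ite_mul, zero_mul,
    Finset.sum_ite_eq', Finset.mem_univ, if_true, mul_sub]

/-- The skew-symmetric function on ordered pairs extending `w`. A linear relation with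
coefficients `w` among the rows of `C_d(q)`, `d` odd, is an equilibrium condition on `skewExtend w`
at every vertex. -/
def skewExtend (w : Pair n → ℝ) (i j : Fin n) : ℝ :=
  if h : i < j then w ⟨(i, j), h⟩ else if h : j < i then -w ⟨(j, i), h⟩ else 0

lemma skewExtend_swap (w : Pair n → ℝ) (i j : Fin n) : skewExtend w j i = -skewExtend w i j := by
  rcases lt_trichotomy i j with h | rfl | h
  · simp [skewExtend, h, h.not_gt]
  · simp [skewExtend]
  · simp [skewExtend, h, h.not_gt]

@[simp]
lemma skewExtend_apply (w : Pair n → ℝ) (e : Pair n) : skewExtend w e.1.1 e.1.2 = w e :=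
  dif_pos e.2

lemma skewExtend_restrict {W : Fin n → Fin n → ℝ} (hW : ∀ i j, W j i = -W i j) :
    skewExtend (fun e => W e.1.1 e.1.2) = W := by
  funext i j
  rcases lt_trichotomy i j with h | rfl | h
  · simp [skewExtend, h]
  · simpa [skewExtend] using (self_eq_neg.mp (hW i i)).symm
  · simp [skewExtend, h, h.not_gt, hW j i]

lemma sum_pair_eq_sum_sum {M : Type*} [AddCommMonoid M] (f : Pair n → M) :
    ∑ e, f e = ∑ i, ∑ j, if h : i < j then f ⟨(i, j), h⟩ else 0 := by
  rw [← Fintype.sum_prod_type' (f := fun i j : Fin n => if h : i < j then f ⟨(i, j), h⟩ else 0),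
    ← Finset.sum_subset (Finset.filter_subset (fun p : Fin n × Fin n => p.1 < p.2) _)
      fun p _ hp => dif_neg (by simpa using hp),
    Finset.sum_subtype (p := fun p : Fin n × Fin n => p.1 < p.2) _ (by simp)]
  exact Finset.sum_congr rfl fun e _ => by rw [dif_pos e.2]

lemma sum_smul_cofRow_apply (hd : Odd d) (w : Pair n → ℝ) (i : Fin n) (c : Fin d) :
    (∑ e, w e • cofRow d q e) (i, c) =
      (∑ j, skewExtend w i j • cvec d (q i) (q j)) c := by
  let F (k l : Fin n) : ℝ := if h : k < l then w ⟨(k, l), h⟩ * cvec d (q k) (q l) c else 0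
  have hterm (k l : Fin n) :
      (if h : k < l then w ⟨(k, l), h⟩ * cofRow d q ⟨(k, l), h⟩ (i, c) else 0) =
        (if i = k then F k l else 0) - (if i = l then F k l else 0) := by
    simp only [F, cofRow_apply]
    split_ifs <;> simp
  have hpair (j : Fin n) : F i j - F j i = skewExtend w i j * cvec d (q i) (q j) c := by
    simp only [F, skewExtend, cvec_comm hd (q j)]
    split_ifs with hij hji
    · exact absurd hij hji.not_gt
    all_goals simp
  simp only [Finset.sum_apply, Pi.smul_apply, smul_eq_mul, sum_pair_eq_sum_sum, hterm,
    Finset.sum_sub_distrib, Finset.sum_ite_eq, Finset.mem_univ, if_true, ← hpair]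
  rw [Finset.sum_comm]
  simp

end CofactorRows

section VertexEquilibrium

variable {ι : Type*} {p : ℝ × ℝ} {q : ι → ℝ × ℝ} {T : Finset ι} {w : ι → ℝ}

lemma sum_mul_orient_mul_orient_eq_zero (hw : ∑ j ∈ T, w j • cvec 3 p (q j) = 0) (b c : ℝ × ℝ) :
    ∑ j ∈ T, w j * (orient p (q j) b * orient p (q j) c) = 0 := by
  have hcoord (a : Fin 3) : ∑ j ∈ T, w j * cvec 3 p (q j) a = 0 := by
    simpa using congrFun hw a
  have hexpand (j : ι) : w j * (orient p (q j) b * orient p (q j) c) =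
      (b - p).2 * (c - p).2 * (w j * cvec 3 p (q j) 0) -
      ((b - p).1 * (c - p).2 + (b - p).2 * (c - p).1) * (w j * cvec 3 p (q j) 1) +
      (b - p).1 * (c - p).1 * (w j * cvec 3 p (q j) 2) := by
    simp only [orient, det2, cvec, Prod.fst_sub, Prod.snd_sub, Fin.coe_ofNat_eq_mod,
      Nat.reduceMod, Nat.reduceSub]
    ring
  simp only [hexpand, Finset.sum_add_distrib, Finset.sum_sub_distrib, ← Finset.mul_sum, hcoord,
    mul_zero, sub_zero, add_zero]

variable [DecidableEq ι]

lemma mul_prod_orient_eq_mul_prod_orient (hT : T.card = 4)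
    (hw : ∑ j ∈ T, w j • cvec 3 p (q j) = 0) {i j : ι} (hi : i ∈ T) (hj : j ∈ T) :
    w i * ∏ k ∈ T.erase i, orient p (q i) (q k) =
      w j * ∏ k ∈ T.erase j, orient p (q j) (q k) := by
  rcases eq_or_ne i j with rfl | hij
  · rfl
  have hj' : j ∈ T.erase i := Finset.mem_erase.mpr ⟨hij.symm, hj⟩
  have hi' : i ∈ T.erase j := Finset.mem_erase.mpr ⟨hij, hi⟩
  obtain ⟨b, c, hbc, hS⟩ := Finset.card_eq_two.mp
    (show ((T.erase i).erase j).card = 2 by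
      rw [Finset.card_erase_of_mem hj', Finset.card_erase_of_mem hi, hT])
  have hrel := sum_mul_orient_mul_orient_eq_zero hw (q b) (q c)
  rw [← Finset.add_sum_erase _ _ hi, ← Finset.add_sum_erase _ _ hj', hS, Finset.sum_pair hbc,
    orient_self_right, orient_self_right] at hrel
  rw [← Finset.mul_prod_erase _ _ hj', ← Finset.mul_prod_erase _ _ hi',
    Finset.erase_right_comm (a := j), hS, Finset.prod_pair hbc, Finset.prod_pair hbc,
    orient_swap_right p (q i) (q j)]
  linear_combination orient p (q i) (q j) * hrel

-- Four vectors of `ℝ³` satisfy a nontrivial relation, and by the previous lemma it is proportional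
-- to every `w` as on the right-hand side.
lemma sum_smul_cvec_eq_zero_iff (hT : T.card = 4)
    (hne : ∀ j ∈ T, ∀ k ∈ T, j ≠ k → orient p (q j) (q k) ≠ 0) :
    ∑ j ∈ T, w j • cvec 3 p (q j) = 0 ↔
      ∃ l : ℝ, ∀ j ∈ T, w j * ∏ k ∈ T.erase j, orient p (q j) (q k) = l := by
  obtain ⟨j₀, hj₀⟩ := Finset.card_pos.mp (by omega : 0 < T.card)
  refine ⟨fun hw => ⟨_, fun j hj => mul_prod_orient_eq_mul_prod_orient hT hw hj hj₀⟩, ?_⟩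
  rintro ⟨l, hl⟩
  have hprod : ∀ j ∈ T, ∏ k ∈ T.erase j, orient p (q j) (q k) ≠ 0 := fun j hj =>
    Finset.prod_ne_zero_iff.mpr fun k hk =>
      hne j hj k (Finset.mem_of_mem_erase hk) (Finset.ne_of_mem_erase hk).symm
  have hdep : ¬ LinearIndepOn ℝ (fun j => cvec 3 p (q j)) (T : Set ι) := fun h => by
    simpa [hT] using h.linearIndependent.fintype_card_le_finrank
  obtain ⟨f, hf, i, hi, hfi⟩ := not_linearIndepOn_finset_iff.mp hdep
  have hw : ∀ j ∈ T, w j = l / (f i * ∏ k ∈ T.erase i, orient p (q i) (q k)) * f j := by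
    intro j hj
    have hfj := mul_prod_orient_eq_mul_prod_orient hT hf hi hj
    have hm := mul_ne_zero hfi (hprod i hi)
    apply mul_right_cancel₀ (hprod j hj)
    rw [hl j hj, mul_assoc, ← hfj, div_mul_cancel₀ _ hm]
  rw [Finset.sum_congr rfl fun j hj => by rw [hw j hj, mul_smul], ← Finset.smul_sum, hf, smul_zero]

end VertexEquilibrium

section OctahedralStress

/-- The product of the brackets `[q i, q j, q k]` over all `k ≠ i, j`. -/
def edgeProd {n : ℕ} (q : Fin n → ℝ × ℝ) (i j : Fin n) : ℝ :=
  ∏ k ∈ {i, j}ᶜ, orient (q i) (q j) (q k)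

lemma edgeProd_comm {n : ℕ} (hn : Even n) (q : Fin n → ℝ × ℝ) (i j : Fin n) :
    edgeProd q j i = edgeProd q i j := by
  rcases eq_or_ne i j with rfl | hij
  · rfl
  have heven : Even ({i, j}ᶜ : Finset (Fin n)).card := by
    rw [Finset.card_compl, Finset.card_pair hij, Fintype.card_fin]
    exact hn.tsub even_two
  simp only [edgeProd, orient_swap_left (q i) (q j), Finset.pair_comm j i, Finset.prod_neg,
    heven.neg_one_pow, one_mul]

lemma edgeProd_eq_orient_mul_prod {n : ℕ} (q : Fin n → ℝ × ℝ) {i j o : Fin n} (hio : i ≠ o)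
    (hjo : j ≠ o) : edgeProd q i j =
      orient (q i) (q j) (q o) * ∏ k ∈ ({i, o}ᶜ : Finset _).erase j, orient (q i) (q j) (q k) := by
  have hset : ({i, j}ᶜ : Finset (Fin n)).erase o = ({i, o}ᶜ : Finset _).erase j := by
    ext k
    simp only [Finset.mem_erase, Finset.mem_compl, Finset.mem_insert, Finset.mem_singleton]
    tauto
  rw [edgeProd, ← Finset.mul_prod_erase _ _ (a := o) (by simp [hio.symm, hjo.symm]), hset]

lemma NoThreeCollinear.edgeProd_ne_zero {n : ℕ} {q : Fin n → ℝ × ℝ} (hq : NoThreeCollinear q)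
    {i j : Fin n} (hij : i ≠ j) : edgeProd q i j ≠ 0 :=
  Finset.prod_ne_zero_iff.mpr fun k hk => by
    simp only [Finset.mem_compl, Finset.mem_insert, Finset.mem_singleton, not_or] at hk
    exact hq hij (Ne.symm hk.1) (Ne.symm hk.2)

variable {q : Fin 6 → ℝ × ℝ}

-- With the factor `[q i, q j, q o]` moved to the right, the condition holds also for `j = i, o`.
lemma NoThreeCollinear.sum_smul_cvec_eq_zero_iff (hq : NoThreeCollinear q) {i o : Fin 6}
    (hio : i ≠ o) {w : Fin 6 → ℝ} (hi : w i = 0) (ho : w o = 0) :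
    ∑ j, w j • cvec 3 (q i) (q j) = 0 ↔
      ∃ l : ℝ, ∀ j, w j * edgeProd q i j = l * orient (q i) (q j) (q o) := by
  have hmem {j : Fin 6} : j ∈ ({i, o}ᶜ : Finset (Fin 6)) ↔ j ≠ i ∧ j ≠ o := by simp
  have hcard : ({i, o}ᶜ : Finset (Fin 6)).card = 4 := by
    rw [Finset.card_compl, Finset.card_pair hio, Fintype.card_fin]
  have hsum : ∑ j, w j • cvec 3 (q i) (q j) = ∑ j ∈ {i, o}ᶜ, w j • cvec 3 (q i) (q j) := by
    refine (Finset.sum_subset (Finset.subset_univ _) fun j _ hj => ?_).symm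
    obtain rfl | rfl : j = i ∨ j = o := by rw [hmem] at hj; tauto
    all_goals simp [*]
  have hne : ∀ j ∈ ({i, o}ᶜ : Finset (Fin 6)), ∀ k ∈ ({i, o}ᶜ : Finset (Fin 6)), j ≠ k →
      orient (q i) (q j) (q k) ≠ 0 :=
    fun j hj k hk => hq (hmem.mp hj).1.symm (hmem.mp hk).1.symm
  rw [hsum, _root_.sum_smul_cvec_eq_zero_iff hcard hne]
  refine exists_congr fun l => ⟨fun h j => ?_, fun h j hj => ?_⟩
  · by_cases hj : j ≠ i ∧ j ≠ o
    · rw [edgeProd_eq_orient_mul_prod q hio hj.2, mul_left_comm, h j (hmem.mpr hj), mul_comm]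
    · obtain rfl | rfl : j = i ∨ j = o := by tauto
      all_goals simp [*]
  · have hj' := hmem.mp hj
    apply mul_left_cancel₀ (hq hj'.1.symm hio hj'.2)
    rw [mul_left_comm, ← edgeProd_eq_orient_mul_prod q hio hj'.2, h j, mul_comm]

/-- A stress of the octahedron with diagonals `{i, i + 3}` on the points `q`: an element of the
left kernel of `C₃(q)` supported on `G15`, recorded as a skew-symmetric function. -/
structure IsOctahedralStress (q : Fin 6 → ℝ × ℝ) (W : Fin 6 → Fin 6 → ℝ) : Prop where
  skew : ∀ i j, W j i = -W i j
  diagonal : ∀ i, W i (i + 3) = 0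
  equilibrium : ∀ i, ∑ j, W i j • cvec 3 (q i) (q j) = 0

lemma notMem_G15_iff {e : Pair 6} : e ∉ G15 ↔ e.1.2 = e.1.1 + 3 := by
  obtain ⟨⟨i, j⟩, hij⟩ := e
  simp only [G15, Set.mem_ofPred_eq, Prod.mk.injEq, ne_eq] at hij ⊢
  omega

lemma isOctahedralStress_skewExtend {w : Pair 6 → ℝ} (hw : ∀ e ∉ G15, w e = 0)
    (hrel : ∑ e, w e • cofRow 3 q e = 0) : IsOctahedralStress q (skewExtend w) where
  skew := skewExtend_swap w
  diagonal i := by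
    rcases lt_or_gt_of_ne (show i ≠ i + 3 by simp) with h | h
    · rw [skewExtend, dif_pos h]
      exact hw _ (notMem_G15_iff.mpr rfl)
    · rw [skewExtend_swap, skewExtend, dif_pos h, hw _ (notMem_G15_iff.mpr (by simp only; omega)),
        neg_zero]
  equilibrium i := by
    funext c
    rw [← sum_smul_cofRow_apply q (by decide), hrel]
    rfl

lemma IsOctahedralStress.sum_smul_cofRow {W : Fin 6 → Fin 6 → ℝ} (hW : IsOctahedralStress q W) :
    ∑ e : Pair 6, W e.1.1 e.1.2 • cofRow 3 q e = 0 := by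
  funext ⟨i, c⟩
  rw [sum_smul_cofRow_apply q (by decide), skewExtend_restrict hW.skew, hW.equilibrium]
  rfl

lemma linearIndepOn_cofRow_iff {S : Set (Pair 6)} (hS : S ⊆ G15) :
    LinearIndepOn ℝ (cofRow 3 q) S ↔ ∀ W, IsOctahedralStress q W →
      (∀ e : Pair 6, e ∉ S → W e.1.1 e.1.2 = 0) → W = 0 := by
  rw [linearIndepOn_iff]
  constructor
  · intro h W hW hsupp
    have hzero := h ((Finsupp.linearEquivFunOnFinite ℝ ℝ _).symm fun e => W e.1.1 e.1.2)
      ((Finsupp.mem_supported' _ _).mpr fun e he => by simpa using hsupp e he)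
      (by rw [Finsupp.linearCombination_eq_fintype_linearCombination_apply,
        Fintype.linearCombination_apply, hW.sum_smul_cofRow])
    rw [LinearEquiv.map_eq_zero_iff] at hzero
    rw [← skewExtend_restrict hW.skew, hzero]
    funext i j
    simp [skewExtend]
  · intro h l hl hrel
    rw [Finsupp.mem_supported'] at hl
    rw [Finsupp.linearCombination_apply, Finsupp.sum_fintype _ _ (by simp)] at hrel
    have hstress := isOctahedralStress_skewExtend (fun e he => hl e fun heS => he (hS heS)) hrel
    have hzero := h _ hstress fun e he => by rw [skewExtend_apply, hl e he]
    ext e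
    rw [← skewExtend_apply l, hzero]
    rfl

/-- Local multipliers of an octahedral stress. In general position equilibrium at vertex `i`
determines the stress there up to a factor `l i`, and this is the condition that the stresses at
the two ends of every edge are opposite. -/
def IsMultiplier (q : Fin 6 → ℝ × ℝ) (l : Fin 6 → ℝ) : Prop :=
  ∀ i j, l j * orient (q j) (q i) (q (j + 3)) = -(l i * orient (q i) (q j) (q (i + 3)))

lemma NoThreeCollinear.isOctahedralStress_iff (hq : NoThreeCollinear q) {W : Fin 6 → Fin 6 → ℝ}
    (hskew : ∀ i j, W j i = -W i j) (hdiag : ∀ i, W i (i + 3) = 0) :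
    IsOctahedralStress q W ↔ ∃ l, IsMultiplier q l ∧
      ∀ i j, W i j * edgeProd q i j = l i * orient (q i) (q j) (q (i + 3)) := by
  have hvertex (i : Fin 6) := hq.sum_smul_cvec_eq_zero_iff (show i ≠ i + 3 by simp)
    (self_eq_neg.mp (hskew i i)) (hdiag i)
  constructor
  · intro hW
    choose l hl using fun i => (hvertex i).mp (hW.equilibrium i)
    refine ⟨l, fun i j => ?_, hl⟩
    rw [← hl, ← hl, hskew i j, edgeProd_comm (by decide) q i j, neg_mul]
  · rintro ⟨l, -, hl⟩
    exact ⟨hskew, hdiag, fun i => (hvertex i).mpr ⟨l i, hl i⟩⟩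

lemma IsMultiplier.eq_zero (hq : NoThreeCollinear q) {l : Fin 6 → ℝ} (hl : IsMultiplier q l)
    {i : Fin 6} (hi : l i = 0) : l = 0 := by
  have spread {i j : Fin 6} (hi : l i = 0) (hij : i ≠ j) (hj : i ≠ j + 3) : l j = 0 := by
    have h := hl i j
    rw [hi, zero_mul, neg_zero] at h
    exact (mul_eq_zero.mp h).resolve_right (hq hij.symm (by simp) hj)
  funext j
  by_cases hij : i = j
  · rwa [← hij]
  by_cases hj : i = j + 3
  · exact spread (spread hi (show i ≠ i + 1 by simp) (by omega)) (by omega) (by omega)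
  · exact spread hi hij hj

lemma IsOctahedralStress.eq_zero (hq : NoThreeCollinear q) {W : Fin 6 → Fin 6 → ℝ}
    (hW : IsOctahedralStress q W) {e : Pair 6} (he : e ∈ G15) (h0 : W e.1.1 e.1.2 = 0) :
    W = 0 := by
  obtain ⟨l, hl, hWl⟩ := (hq.isOctahedralStress_iff hW.skew hW.diagonal).mp hW
  have hopp : e.1.2 ≠ e.1.1 + 3 := fun h => notMem_G15_iff.mpr h he
  have hle : l e.1.1 = 0 := by
    have h := hWl e.1.1 e.1.2
    rw [h0, zero_mul, eq_comm] at h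
    exact (mul_eq_zero.mp h).resolve_right (hq e.2.ne (by simp) hopp)
  funext i j
  rcases eq_or_ne i j with rfl | hij
  · exact self_eq_neg.mp (hW.skew i i)
  · apply mul_right_cancel₀ (hq.edgeProd_ne_zero hij)
    rw [hWl, hl.eq_zero hq hle]
    simp

lemma IsMultiplier.exists_isOctahedralStress (hq : NoThreeCollinear q) {l : Fin 6 → ℝ}
    (hl : IsMultiplier q l) (h0 : l ≠ 0) : ∃ W, IsOctahedralStress q W ∧ W ≠ 0 := by
  let W (i j : Fin 6) : ℝ := l i * orient (q i) (q j) (q (i + 3)) / edgeProd q i j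
  have hWl (i j : Fin 6) : W i j * edgeProd q i j = l i * orient (q i) (q j) (q (i + 3)) := by
    rcases eq_or_ne i j with rfl | hij
    · simp [W]
    · exact div_mul_cancel₀ _ (hq.edgeProd_ne_zero hij)
  have hskew (i j : Fin 6) : W j i = -W i j := by
    simp only [W, hl i j, edgeProd_comm (by decide) q i j, neg_div]
  refine ⟨W, (hq.isOctahedralStress_iff hskew (by simp [W])).mpr ⟨l, hl, hWl⟩, fun hW => h0 ?_⟩
  have h01 := hWl 0 1
  rw [hW] at h01
  refine hl.eq_zero hq (i := 0) ((mul_eq_zero.mp (h01.symm.trans (zero_mul _))).resolve_right ?_)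
  exact hq (by decide) (by decide) (by decide)

end OctahedralStress

section Concurrency

/-- The three diagonals `q i, q (i + 3)` have a common point in the projective plane, with
homogeneous coordinates `(v, z)`; for `z = 0` they are parallel to `v`. -/
def ProjectiveDesarguesPos (q : Fin 6 → ℝ × ℝ) : Prop :=
  ∃ (v : ℝ × ℝ) (z : ℝ), (v, z) ≠ 0 ∧ ∀ i, det2 (q (i + 3) - q i) (v - z • q i) = 0

variable {q : Fin 6 → ℝ × ℝ}

lemma projectiveDesarguesPos_of_forall_lt_three {v : ℝ × ℝ} {z : ℝ} (hvz : (v, z) ≠ 0)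
    (h : ∀ i : Fin 6, i < 3 → det2 (q (i + 3) - q i) (v - z • q i) = 0) :
    ProjectiveDesarguesPos q := by
  refine ⟨v, z, hvz, fun i => ?_⟩
  by_cases hi : i < 3
  · exact h i hi
  · obtain ⟨j, hj, rfl⟩ : ∃ j : Fin 6, j < 3 ∧ i = j + 3 := ⟨i - 3, by omega, by omega⟩
    have hj := h j hj
    rw [show j + 3 + 3 = j by omega]
    simp only [det2, Prod.fst_sub, Prod.snd_sub, Prod.smul_fst, Prod.smul_snd, smul_eq_mul] at hj ⊢
    linear_combination -hj

lemma NoThreeCollinear.injective (hq : NoThreeCollinear q) : Function.Injective q := by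
  intro i j hij
  by_contra hne
  have hthird : ∀ i j : Fin 6, ∃ k, i ≠ k ∧ j ≠ k := by decide
  obtain ⟨k, hik, hjk⟩ := hthird i j
  exact hq hne hik hjk (by rw [hij, orient_self_left])

-- `l i` is the position of the common point on the diagonal at `i`, in units of the diagonal.
lemma ProjectiveDesarguesPos.exists_isMultiplier (hq : NoThreeCollinear q)
    (h : ProjectiveDesarguesPos q) : ∃ l, IsMultiplier q l ∧ l ≠ 0 := by
  obtain ⟨v, z, hvz, hdet⟩ := h
  have hdir (i : Fin 6) : q (i + 3) - q i ≠ 0 := sub_ne_zero.mpr (hq.injective.ne (by simp))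
  choose l hl using fun i => exists_eq_smul_of_det2_eq_zero (hdir i) (hdet i)
  refine ⟨l, fun i j => ?_, ?_⟩
  · have horient (i j : Fin 6) :
        l i * orient (q i) (q j) (q (i + 3)) = det2 (q j - q i) (v - z • q i) := by
      simp only [hl, orient, det2, Prod.smul_fst, Prod.smul_snd, smul_eq_mul]
      ring
    simp only [horient, det2, Prod.fst_sub, Prod.snd_sub, Prod.smul_fst, Prod.smul_snd,
      smul_eq_mul]
    ring
  · rintro rfl
    have hv (i : Fin 6) : v = z • q i := sub_eq_zero.mp (by simpa using hl i)
    have hz : z = 0 := by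
      by_contra hz
      exact hq.injective.ne (show (0 : Fin 6) ≠ 1 by decide)
        (smul_right_injective _ hz ((hv 0).symm.trans (hv 1)))
    exact hvz (by simp [hz, hv 0])

-- The matrix `l i * [q i, q j, q (i + 3)]`, `i, j < 3`, is skew-symmetric; the axial vector in
-- its kernel gives the common point in barycentric coordinates with respect to `q 0, q 1, q 2`.
lemma IsMultiplier.projectiveDesarguesPos (hq : NoThreeCollinear q) {l : Fin 6 → ℝ}
    (hl : IsMultiplier q l) (h0 : l ≠ 0) : ProjectiveDesarguesPos q := by
  have hl0 (i : Fin 6) : l i ≠ 0 := fun hi => h0 (hl.eq_zero hq hi)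
  let c₀ := l 1 * orient (q 1) (q 2) (q 4)
  let c₁ := l 2 * orient (q 2) (q 0) (q 5)
  let c₂ := l 0 * orient (q 0) (q 1) (q 3)
  have h01 : l 1 * orient (q 1) (q 0) (q 4) = -c₂ := hl 0 1
  have h12 : l 2 * orient (q 2) (q 1) (q 5) = -c₀ := hl 1 2
  have h20 : l 0 * orient (q 0) (q 2) (q 3) = -c₁ := hl 2 0
  have hexpand (i : Fin 6) :
      det2 (q (i + 3) - q i) ((c₀ • q 0 + c₁ • q 1 + c₂ • q 2) - (c₀ + c₁ + c₂) • q i) =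
        -(c₀ * orient (q i) (q 0) (q (i + 3)) + c₁ * orient (q i) (q 1) (q (i + 3)) +
          c₂ * orient (q i) (q 2) (q (i + 3))) := by
    simp only [orient, det2, Prod.fst_sub, Prod.snd_sub, Prod.fst_add, Prod.snd_add,
      Prod.smul_fst, Prod.smul_snd, smul_eq_mul]
    ring
  refine projectiveDesarguesPos_of_forall_lt_three
    (v := c₀ • q 0 + c₁ • q 1 + c₂ • q 2) (z := c₀ + c₁ + c₂) (fun hvz => ?_) fun i hi => ?_
  · obtain ⟨hv, hz⟩ := Prod.mk_eq_zero.mp hvz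
    have hc₂ : c₂ * orient (q 0) (q 1) (q 2) =
        det2 (q 1 - q 0) ((c₀ • q 0 + c₁ • q 1 + c₂ • q 2) - (c₀ + c₁ + c₂) • q 0) := by
      simp only [orient, det2, Prod.fst_sub, Prod.snd_sub, Prod.fst_add, Prod.snd_add,
        Prod.smul_fst, Prod.smul_snd, smul_eq_mul]
      ring
    rw [hv, hz] at hc₂
    refine mul_ne_zero (mul_ne_zero (hl0 0) ?_) ?_ (hc₂.trans (by simp [det2]))
    all_goals exact hq (by decide) (by decide) (by decide)
  · apply mul_left_cancel₀ (hl0 i)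
    rw [hexpand, mul_zero]
    obtain rfl | rfl | rfl : i = 0 ∨ i = 1 ∨ i = 2 := by omega
    · simp only [zero_add, orient_self_left]
      linear_combination -c₂ * h20
    · simp only [Fin.reduceAdd, orient_self_left]
      linear_combination -c₀ * h01
    · simp only [Fin.reduceAdd, orient_self_left]
      linear_combination -c₁ * h12

lemma DesarguesPos.projectiveDesarguesPos (h : DesarguesPos q) : ProjectiveDesarguesPos q := by
  obtain ⟨p, h0, h1, h2⟩ := h
  refine projectiveDesarguesPos_of_forall_lt_three (v := p) (z := 1) (by simp) fun i hi => ?_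
  obtain rfl | rfl | rfl : i = 0 ∨ i = 1 ∨ i = 2 := by omega
  all_goals simpa only [one_smul]

lemma ConvexPosition.desarguesPos_iff (hq : ConvexPosition q) :
    DesarguesPos q ↔ ProjectiveDesarguesPos q := by
  refine ⟨DesarguesPos.projectiveDesarguesPos, ?_⟩
  rintro ⟨v, z, hvz, hdet⟩
  have hcross : det2 (q 3 - q 0) (q 4 - q 1) ≠ 0 := by
    have h013 : 0 < orient (q 0) (q 1) (q 3) := hq.2 0 1 3 (by decide) (by decide)
    have h034 : 0 < orient (q 0) (q 3) (q 4) := hq.2 0 3 4 (by decide) (by decide)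
    have hsum : det2 (q 3 - q 0) (q 4 - q 1) =
        orient (q 0) (q 1) (q 3) + orient (q 0) (q 3) (q 4) := by
      simp only [orient, det2, Prod.fst_sub, Prod.snd_sub]
      ring
    rw [hsum]
    positivity
  have hz : z ≠ 0 := by
    rintro rfl
    refine hvz (Prod.mk_eq_zero.mpr ⟨eq_zero_of_det2_eq_zero hcross ?_ ?_, rfl⟩)
    · simpa using hdet 0
    · simpa using hdet 1
  have hline (i : Fin 6) : onLine (q i) (q (i + 3)) (z⁻¹ • v) := by
    apply mul_left_cancel₀ hz
    rw [mul_zero, ← hdet i]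
    simp only [det2, Prod.fst_sub, Prod.snd_sub, Prod.smul_fst, Prod.smul_snd, smul_eq_mul]
    field_simp
  exact ⟨z⁻¹ • v, hline 0, hline 1, hline 2⟩

lemma NoThreeCollinear.exists_isOctahedralStress_ne_zero_iff (hq : NoThreeCollinear q) :
    (∃ W, IsOctahedralStress q W ∧ W ≠ 0) ↔ ProjectiveDesarguesPos q := by
  constructor
  · rintro ⟨W, hW, hW0⟩
    obtain ⟨l, hl, hWl⟩ := (hq.isOctahedralStress_iff hW.skew hW.diagonal).mp hW
    refine hl.projectiveDesarguesPos hq ?_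
    rintro rfl
    have hW01 : W 0 1 = 0 := by
      simpa [hq.edgeProd_ne_zero (show (0 : Fin 6) ≠ 1 by decide)] using hWl 0 1
    exact hW0 (hW.eq_zero hq (e := ⟨(0, 1), by decide⟩) (by simp [G15]) hW01)
  · intro h
    obtain ⟨l, hl, hl0⟩ := h.exists_isMultiplier hq
    exact hl.exists_isOctahedralStress hq hl0

end Concurrency

section Rank

variable {n : ℕ} (q : Fin n → ℝ × ℝ)

/-- The trivial motions of `C₃(q)`. A line through `(X, Y)` with direction `(x, y)` has Plücker
coordinates `(x, y, s)`, `s = X y - Y x`. Row `k` restricts the `k`-th of the quadratic forms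
`x², xy, y², xs, ys, s²` to the lines through each `q i` and lists its coefficients at
`x², xy, y²`. -/
def trivialMotions : Matrix (Fin 6) (Fin n × Fin 3) ℝ :=
  .of fun k ic =>
    let X := (q ic.1).1
    let Y := (q ic.1).2
    (![![1, 0, 0], ![0, 1, 0], ![0, 0, 1], ![-Y, X, 0], ![0, -Y, X],
      ![Y ^ 2, -2 * X * Y, X ^ 2]] : Matrix (Fin 6) (Fin 3) ℝ) k ic.2

-- The line through `q i` and `q j` is the same line seen from either point.
lemma cofRow_mul_transpose_trivialMotions :
    (Matrix.of (cofRow 3 q) : Matrix (Pair n) _ ℝ) * (trivialMotions q).transpose = 0 := by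
  ext e k
  change cofRow 3 q e ⬝ᵥ trivialMotions q k = 0
  rw [cofRow_dotProduct]
  fin_cases k <;> simp [trivialMotions, cvec, Fin.sum_univ_three] <;> ring

variable {q}

-- Put `D = [q i, q j, q k]`. The Plücker vectors `(x, y, s)` of the three sides sum to `(0, 0, D)`,
-- and the parallel to a side through the opposite vertex differs from that side by `(0, 0, -D)`.
-- So the sum of the form over the parallels minus its sum over the sides is `D ^ 2 * g 5`.
lemma coeff_sq_eq_zero_of_vanish_on_pencils {ι : Type*} {q : ι → ℝ × ℝ} {i j k : ι}
    (h : orient (q i) (q j) (q k) ≠ 0) {g : Fin 6 → ℝ}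
    (hxx : ∀ m, g 0 - g 3 * (q m).2 + g 5 * (q m).2 ^ 2 = 0)
    (hxy : ∀ m, g 1 + g 3 * (q m).1 - g 4 * (q m).2 - g 5 * (2 * (q m).1 * (q m).2) = 0)
    (hyy : ∀ m, g 2 + g 4 * (q m).1 + g 5 * (q m).1 ^ 2 = 0) : g 5 = 0 := by
  have hform (m a b : ι) : let u := q b - q a
      g 0 * u.1 ^ 2 + g 1 * u.1 * u.2 + g 2 * u.2 ^ 2 +
        (g 3 * u.1 + g 4 * u.2) * det2 (q m) u + g 5 * det2 (q m) u ^ 2 = 0 := by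
    simp only [det2]
    linear_combination (q b - q a).1 ^ 2 * hxx m + (q b - q a).1 * (q b - q a).2 * hxy m +
      (q b - q a).2 ^ 2 * hyy m
  apply mul_left_cancel₀ (pow_ne_zero 2 h)
  simp only [orient, det2, Prod.fst_sub, Prod.snd_sub] at hform ⊢
  linear_combination hform i j k + hform j k i + hform k i j - hform i i j - hform j j k -
    hform k k i

lemma linearIndependent_trivialMotions_row {i j k : Fin n}
    (h : orient (q i) (q j) (q k) ≠ 0) : LinearIndependent ℝ (trivialMotions q).row := by
  rw [Fintype.linearIndependent_iff]
  intro g hg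
  have hcoord (m : Fin n) (c : Fin 3) : ∑ r, g r * trivialMotions q r (m, c) = 0 := by
    simpa using congrFun hg (m, c)
  have hxx (m : Fin n) : g 0 - g 3 * (q m).2 + g 5 * (q m).2 ^ 2 = 0 := by
    simpa [trivialMotions, Fin.sum_univ_six, sub_eq_add_neg] using hcoord m 0
  have hxy (m : Fin n) :
      g 1 + g 3 * (q m).1 - g 4 * (q m).2 - g 5 * (2 * (q m).1 * (q m).2) = 0 := by
    simpa [trivialMotions, Fin.sum_univ_six, sub_eq_add_neg] using hcoord m 1
  have hyy (m : Fin n) : g 2 + g 4 * (q m).1 + g 5 * (q m).1 ^ 2 = 0 := by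
    simpa [trivialMotions, Fin.sum_univ_six] using hcoord m 2
  have hg5 : g 5 = 0 := coeff_sq_eq_zero_of_vanish_on_pencils h hxx hxy hyy
  simp only [hg5, zero_mul, add_zero, sub_zero] at hxx hxy hyy
  have hg3 : g 3 = 0 := by
    apply mul_left_cancel₀ h
    simp only [orient, det2, Prod.fst_sub, Prod.snd_sub]
    linear_combination ((q j).1 - (q i).1) * (hxx i - hxx k) -
      ((q k).1 - (q i).1) * (hxx i - hxx j)
  have hg4 : g 4 = 0 := by
    apply mul_left_cancel₀ h
    simp only [orient, det2, Prod.fst_sub, Prod.snd_sub]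
    linear_combination ((q k).2 - (q i).2) * (hyy j - hyy i) -
      ((q j).2 - (q i).2) * (hyy k - hyy i)
  simp only [hg3, hg4, zero_mul, add_zero, sub_zero] at hxx hxy hyy
  intro r
  fin_cases r
  exacts [hxx i, hxy i, hyy i, hg3, hg4, hg5]

lemma finrank_span_range_cofRow_add_six_le {i j k : Fin n} (h : orient (q i) (q j) (q k) ≠ 0) :
    Module.finrank ℝ (Submodule.span ℝ (Set.range (cofRow 3 q))) + 6 ≤ n * 3 := by
  have hrank :=
    Matrix.rank_add_rank_le_card_of_mul_eq_zero (cofRow_mul_transpose_trivialMotions q)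
  rw [Matrix.rank_transpose, (linearIndependent_trivialMotions_row h).rank_matrix,
    Matrix.rank_eq_finrank_span_row] at hrank
  rwa [Fintype.card_prod, Fintype.card_fin, Fintype.card_fin, Fintype.card_fin] at hrank

lemma card_G15 : Nat.card G15 = 12 := by
  change Nat.card {e : Pair 6 // e.val ≠ (0, 3) ∧ e.val ≠ (1, 4) ∧ e.val ≠ (2, 5)} = 12
  rw [Nat.card_eq_fintype_card]
  decide

lemma span_cofRow_image_G15 {q : Fin 6 → ℝ × ℝ} (hq : NoThreeCollinear q)
    (h : LinearIndepOn ℝ (cofRow 3 q) G15) :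
    Submodule.span ℝ (cofRow 3 q '' G15) = Submodule.span ℝ (Set.range (cofRow 3 q)) := by
  refine Submodule.eq_of_le_of_finrank_le (Submodule.span_mono (Set.image_subset_range _ _)) ?_
  have hrank := finrank_span_range_cofRow_add_six_le
    (hq (i := 0) (j := 1) (k := 2) (by decide) (by decide) (by decide))
  have : Fintype G15 := Fintype.ofFinite _
  have hcard := finrank_span_eq_card h.linearIndependent
  rw [← Nat.card_eq_fintype_card, card_G15, ← Set.image_eq_range] at hcard
  omega

end Rank

theorem stmt15_general {q : Fin 6 → ℝ × ℝ} (hq : NoThreeCollinear q) :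
    (ProjectiveDesarguesPos q →
      ¬ LinearIndependent ℝ (fun e : G15 => cofRow 3 q e.val) ∧
      ∀ S : Set (Pair 6), S ⊂ G15 →
        LinearIndependent ℝ (fun e : S => cofRow 3 q e.val)) ∧
    (¬ ProjectiveDesarguesPos q →
      LinearIndependent ℝ (fun e : G15 => cofRow 3 q e.val) ∧
      Submodule.span ℝ (cofRow 3 q '' G15) =
        Submodule.span ℝ (Set.range (cofRow 3 q))) := by
  refine ⟨fun hD => ⟨fun hind => ?_, fun S hS => ?_⟩, fun hD => ?_⟩
  · obtain ⟨W, hW, hW0⟩ := hq.exists_isOctahedralStress_ne_zero_iff.mpr hD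
    refine hW0 ((linearIndepOn_cofRow_iff subset_rfl).mp hind W hW fun e he => ?_)
    rw [notMem_G15_iff.mp he, hW.diagonal]
  · refine (linearIndepOn_cofRow_iff hS.subset).mpr fun W hW hsupp => ?_
    obtain ⟨e, he, heS⟩ := Set.exists_of_ssubset hS
    exact hW.eq_zero hq he (hsupp e heS)
  · have hind : LinearIndepOn ℝ (cofRow 3 q) G15 :=
      (linearIndepOn_cofRow_iff subset_rfl).mpr fun W hW _ => by
        by_contra hW0
        exact hD (hq.exists_isOctahedralStress_ne_zero_iff.mp ⟨W, hW, hW0⟩)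
    exact ⟨hind, span_cofRow_image_G15 hq hind⟩

/-- For six points in convex position, the rows of `C₃(q)` indexed by the
octahedron graph form a circuit if the points are in Desargues position, and are linearly
independent (forming a basis of the row space) otherwise. -/
theorem stmt15 (q : Fin 6 → ℝ × ℝ) (hq : ConvexPosition q) :
    (DesarguesPos q →
      ¬ LinearIndependent ℝ (fun e : G15 => cofRow 3 q e.val) ∧
      ∀ S : Set (Pair 6), S ⊂ G15 →
        LinearIndependent ℝ (fun e : S => cofRow 3 q e.val)) ∧
    (¬ DesarguesPos q →
      LinearIndependent ℝ (fun e : G15 => cofRow 3 q e.val) ∧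
      Submodule.span ℝ (cofRow 3 q '' G15) =
        Submodule.span ℝ (Set.range (cofRow 3 q))) := by
  rw [hq.desarguesPos_iff]
  exact stmt15_general hq.noThreeCollinear
end

section
/- Let (t₁,…,t₆) = (1,3,4,6,7,9) and q_i = (t_i, t_i²) ∈ ℝ² for i = 1,…,6, and let G be the set of the 12 pairs of {1,…,6} other than {1,4}, {2,5}, {3,6}. Then the rows of C₃(q₁,…,q₆) indexed by G form a circuit: they are linearly dependent, but the rows indexed by any proper subset of G are linearly independent. -/
open scoped BigOperators

/-- The points `qᵢ = (tᵢ, tᵢ²)` on the parabola for `(t₁,…,t₆) = (1,3,4,6,7,9)`. -/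
def q16 : Fin 6 → ℝ × ℝ := ![(1, 1), (3, 9), (4, 16), (6, 36), (7, 49), (9, 81)]

/-!
Put the points on a parabola, `q_i = (t_i, t_i²)` with distinct `t_i`. Then
`c_{ij} = (t_i - t_j)^(d-1) (1, t_i + t_j, …, (t_i + t_j)^(d-1))`, so the equilibrium of a stress at
a vertex is a linear relation between points of the moment curve in `ℝ^d`. Any `d` such points are
independent; hence, at a vertex of degree at most `d + 1`, a stress that vanishes on one edge
vanishes on all of them. If the graph is connected, the zero propagates everywhere, so a dependency
uses every edge.

Dependencies come from Lagrange interpolation. For a symmetric polynomial `B(x, y)` of degree at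
most `n - d - 2` in each variable, the weights `B(t_i, t_j) / (P_i P_j (t_i - t_j)^(d-2))` with
`P_i = ∏_{k ≠ i} (t_i - t_k)` form a stress on the complete graph, because
`∑_j f(t_j) / P_j = 0` whenever `deg f ≤ n - 2`. For `n = 6`, `d = 3` one may take
`B = α x y + β (x + y) + γ`, and a nonzero such `B` vanishes on the three missing pairs of the
octahedron exactly when these pairs belong to an involution of the projective line.
For `1, 3, 4, 6, 7, 9` this is `(x - 5) (y - 5) = -4`.
-/

open Polynomial Lagrange

section General

variable {K ι : Type*} [Field K]

theorem sum_eval_mul_nodalWeight_eq_zero [DecidableEq ι] {s : Finset ι} {x : ι → K}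
    (hx : Set.InjOn x s) {p : K[X]} (hp : p.natDegree + 1 < s.card) :
    ∑ i ∈ s, p.eval (x i) * nodalWeight s x i = 0 := by
  have hdeg : p.degree < s.card :=
    degree_le_natDegree.trans_lt (by exact_mod_cast (Nat.lt_succ_self _).trans hp)
  have hcoeff : p.coeff (s.card - 1) = 0 := coeff_eq_zero_of_natDegree_lt (by lia)
  simpa only [nodalWeight, Finset.prod_inv_distrib, div_eq_mul_inv, hcoeff] using
    (coeff_eq_sum hx hdeg).symm

theorem eq_zero_of_forall_sum_mul_pow_eq_zero {s : Finset ι} {x g : ι → K} {d : ℕ}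
    (hx : Set.InjOn x s) (hs : s.card ≤ d)
    (hg : ∀ a < d, ∑ i ∈ s, g i * x i ^ a = 0) {i : ι} (hi : i ∈ s) : g i = 0 := by
  classical
  have hpoly : ∀ p : K[X], p.natDegree < d → ∑ j ∈ s, g j * p.eval (x j) = 0 := by
    intro p hp
    simp_rw [eval_eq_sum_range' hp, Finset.mul_sum, mul_left_comm (g _)]
    rw [Finset.sum_comm]
    refine Finset.sum_eq_zero fun a ha ↦ ?_
    rw [← Finset.mul_sum, hg a (Finset.mem_range.mp ha), mul_zero]
  have hcard : 0 < s.card := Finset.card_pos.mpr ⟨i, hi⟩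
  have hbasis := hpoly (Lagrange.basis s x i) (by rw [natDegree_basis hx hi]; lia)
  rw [Finset.sum_eq_single_of_mem i hi fun j hj hji ↦ by
    rw [eval_basis_of_ne hji.symm hj, mul_zero]] at hbasis
  simpa only [eval_basis_self hx hi, mul_one] using hbasis

theorem linearIndepOn_iff_forall_fun {R M : Type*} [Fintype ι] [Ring R] [AddCommGroup M]
    [Module R M] {v : ι → M} {s : Set ι} :
    LinearIndepOn R v s ↔
      ∀ c : ι → R, (∀ i ∉ s, c i = 0) → ∑ i, c i • v i = 0 → c = 0 := by
  rw [linearIndepOn_iff, Finsupp.equivFunOnFinite.forall_congr_left]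
  refine forall_congr' fun c ↦ ?_
  rw [Finsupp.mem_supported', Finsupp.linearCombination_apply, Finsupp.sum_fintype _ _ (by simp),
    Equiv.symm_apply_eq]
  rfl

end General

section Incidence

variable {n : ℕ}

/-- The vertex `v` is an endpoint of the pair `e`. -/
abbrev Incident (v : Fin n) (e : Pair n) : Prop := v = e.val.1 ∨ v = e.val.2

/-- The entry of the oriented incidence matrix at the pair `e` and the vertex `v`, each pair being
oriented away from its smaller endpoint. -/
def incidenceSign (e : Pair n) (v : Fin n) : ℝ :=
  (if v = e.val.1 then 1 else 0) - (if v = e.val.2 then 1 else 0)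

/-- The graph with edge set `G` is connected, apart from isolated vertices: any two edges are
joined by a sequence of edges of `G` in which consecutive ones share an endpoint. -/
def EdgeConnected (G : Set (Pair n)) : Prop :=
  ∀ e ∈ G, ∀ f ∈ G,
    Relation.ReflTransGen (fun e' f' ↦ f' ∈ G ∧ ∃ v, Incident v e' ∧ Incident v f') e f

theorem incidenceSign_eq_zero_iff {e : Pair n} {v : Fin n} :
    incidenceSign e v = 0 ↔ ¬ Incident v e := by
  have := e.property.ne
  unfold incidenceSign Incident
  split_ifs <;> simp_all

theorem sum_incidenceSign_mul {H : Fin n → Fin n → ℝ} (hH : ∀ i j, H j i = -H i j) (v : Fin n) :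
    ∑ e : Pair n, incidenceSign e v * H e.val.1 e.val.2 = ∑ j, H v j := by
  have hdiag : H v v = 0 := self_eq_neg.mp (hH v v)
  have hsplit : ∀ i j : Fin n,
      (if i < j then ((if v = i then 1 else 0) - (if v = j then 1 else 0)) * H i j else 0) =
        (if v = i then (if i < j then H i j else 0) else 0) -
          (if v = j then (if i < j then H i j else 0) else 0) := by
    intro i j
    split_ifs <;> simp
  calc ∑ e : Pair n, incidenceSign e v * H e.val.1 e.val.2
      = ∑ i, ∑ j, if i < j then
          ((if v = i then 1 else 0) - (if v = j then 1 else 0)) * H i j else 0 := by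
        rw [← Fintype.sum_prod_type', ← Finset.sum_filter]
        exact (Finset.sum_subtype _ (by simp) fun p : Fin n × Fin n ↦
          ((if v = p.1 then 1 else 0) - (if v = p.2 then 1 else 0)) * H p.1 p.2).symm
    _ = (∑ j, if v < j then H v j else 0) - ∑ i, if i < v then H i v else 0 := by
        simp only [hsplit, Finset.sum_sub_distrib, Finset.sum_ite_irrel, Finset.sum_const_zero,
          Finset.sum_ite_eq, Finset.mem_univ, if_true]
    _ = ∑ j, H v j := by
        rw [← Finset.sum_sub_distrib]
        refine Finset.sum_congr rfl fun j _ ↦ ?_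
        rcases lt_trichotomy v j with h | rfl | h
        · simp [h, h.not_gt]
        · simp [hdiag]
        · simp [h, h.not_gt, hH v j]

end Incidence

section Parabola

variable {n d : ℕ} {t : Fin n → ℝ}

/-- The points `(t_i, t_i²)` of the standard parabola. -/
def parabolaPoints (t : Fin n → ℝ) (i : Fin n) : ℝ × ℝ := (t i, t i ^ 2)

/-- The coefficients `c` are an equilibrium stress of the points `q`: a linear relation between the
rows of the cofactor rigidity matrix `C_d(q)`. -/
def IsStress (d : ℕ) (q : Fin n → ℝ × ℝ) (c : Pair n → ℝ) : Prop :=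
  ∑ e, c e • cofRow d q e = 0

theorem cofRow_parabolaPoints (e : Pair n) (v : Fin n) (a : Fin d) :
    cofRow d (parabolaPoints t) e (v, a) =
      incidenceSign e v * (t e.val.1 - t e.val.2) ^ (d - 1) *
        (t e.val.1 + t e.val.2) ^ (a : ℕ) := by
  have hcvec : cvec d (parabolaPoints t e.val.1) (parabolaPoints t e.val.2) a =
      (t e.val.1 - t e.val.2) ^ (d - 1) * (t e.val.1 + t e.val.2) ^ (a : ℕ) := by
    have hexp : d - 1 = (d - 1 - a) + a := by lia
    have hsq : t e.val.1 ^ 2 - t e.val.2 ^ 2 =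
      (t e.val.1 - t e.val.2) * (t e.val.1 + t e.val.2) := by ring
    simp only [cvec, parabolaPoints]
    rw [hsq, mul_pow, ← mul_assoc, ← pow_add, ← hexp]
  have hne := e.property.ne
  simp only [cofRow, hcvec, incidenceSign]
  split_ifs <;> simp_all

theorem isStress_parabolaPoints_iff {c : Pair n → ℝ} :
    IsStress d (parabolaPoints t) c ↔ ∀ v, ∀ a < d, ∑ e : Pair n,
      c e * (incidenceSign e v * (t e.val.1 - t e.val.2) ^ (d - 1)) *
        (t e.val.1 + t e.val.2) ^ a = 0 := by
  simp only [IsStress, funext_iff, Prod.forall, Finset.sum_apply, Pi.smul_apply, smul_eq_mul,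
    cofRow_parabolaPoints, Pi.zero_apply, Fin.forall_iff, mul_assoc]

theorem sub_ne_zero_of_pair (ht : Function.Injective t) (e : Pair n) :
    t e.val.1 - t e.val.2 ≠ 0 :=
  sub_ne_zero.mpr (ht.ne e.property.ne)

theorem injOn_add_of_incident (ht : Function.Injective t) (v : Fin n) :
    Set.InjOn (fun e : Pair n ↦ t e.val.1 + t e.val.2) {e | Incident v e} := by
  rintro ⟨⟨i, j⟩, hij⟩ (rfl | rfl) ⟨⟨k, l⟩, hkl⟩ (rfl | rfl) hsum
  · have : j = l := ht (add_left_cancel hsum)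
    subst this; rfl
  · have : j = k := ht (add_left_cancel (hsum.trans (add_comm _ _)))
    grind
  · have : i = l := ht (add_right_cancel (hsum.trans (add_comm _ _)))
    grind
  · have : i = k := ht (add_right_cancel hsum)
    subst this; rfl

theorem IsStress.eq_zero_of_incident {c : Pair n → ℝ} {G : Set (Pair n)}
    (hc : IsStress d (parabolaPoints t) c) (ht : Function.Injective t)
    (hcG : ∀ e ∉ G, c e = 0) {v : Fin n} (hdeg : {e ∈ G | Incident v e}.ncard ≤ d + 1)
    {e f : Pair n} (hfG : f ∈ G) (hfv : Incident v f) (hf : c f = 0) (hev : Incident v e) :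
    c e = 0 := by
  classical
  obtain rfl | hef := eq_or_ne e f
  · exact hf
  by_cases heG : e ∈ G
  swap
  · exact hcG e heG
  let s : Finset (Pair n) := {e' | (e' ∈ G ∧ Incident v e') ∧ e' ≠ f}
  have hs : s.card ≤ d := by
    have hcoe : (s : Set (Pair n)) = {e ∈ G | Incident v e} \ {f} := by
      ext
      simp only [s, Finset.coe_filter_univ]
      rfl
    have hf_mem : f ∈ {e ∈ G | Incident v e} := ⟨hfG, hfv⟩
    rw [← Set.ncard_coe_finset, hcoe, Set.ncard_sdiff_singleton_of_mem hf_mem]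
    lia
  have hinj : Set.InjOn (fun e : Pair n ↦ t e.val.1 + t e.val.2) s :=
    (injOn_add_of_incident ht v).mono fun e' he' ↦ by simp_all [s]
  have hsum : ∀ a < d, ∑ e' ∈ s,
      c e' * (incidenceSign e' v * (t e'.val.1 - t e'.val.2) ^ (d - 1)) *
        (t e'.val.1 + t e'.val.2) ^ a = 0 := by
    intro a ha
    rw [← isStress_parabolaPoints_iff.mp hc v a ha]
    refine Finset.sum_subset s.subset_univ fun e' _ he' ↦ ?_
    by_cases hv : Incident v e'
    · have : c e' = 0 := by grind
      simp [this]
    · simp [incidenceSign_eq_zero_iff.mpr hv]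
  have hzero := eq_zero_of_forall_sum_mul_pow_eq_zero hinj hs hsum (i := e)
    (by simp [s, heG, hev, hef])
  have hsign : incidenceSign e v ≠ 0 := fun h ↦ incidenceSign_eq_zero_iff.mp h hev
  exact (mul_eq_zero.mp hzero).resolve_right
    (mul_ne_zero hsign (pow_ne_zero _ (sub_ne_zero_of_pair ht e)))

theorem linearIndepOn_cofRow_parabolaPoints_of_ssubset (ht : Function.Injective t)
    {G S : Set (Pair n)} (hG : EdgeConnected G)
    (hdeg : ∀ v, {e ∈ G | Incident v e}.ncard ≤ d + 1) (hS : S ⊂ G) :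
    LinearIndepOn ℝ (cofRow d (parabolaPoints t)) S := by
  refine linearIndepOn_iff_forall_fun.mpr fun c hcS hc ↦ ?_
  have hcG : ∀ e ∉ G, c e = 0 := fun e he ↦ hcS e fun heS ↦ he (hS.1 heS)
  obtain ⟨f, hfG, hfS⟩ := Set.exists_of_ssubset hS
  funext e
  by_cases heG : e ∈ G
  swap
  · exact hcG e heG
  have hchain := hG f hfG e heG
  suffices h : e ∈ G ∧ c e = 0 from h.2
  clear heG
  induction hchain with
  | refl => exact ⟨hfG, hcS f hfS⟩
  | tail _ hstep ih =>
    obtain ⟨hnext, v, hv, hv'⟩ := hstep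
    exact ⟨hnext, IsStress.eq_zero_of_incident hc ht hcG (hdeg v) ih.1 hv ih.2 hv'⟩

/-- The stress of the complete graph on the points `(t_i, t_i²)` given by the symmetric polynomial
`B(x, y)`, encoded as the polynomial `B x` in `y` for each `x`. The quotient of powers of
`t_i - t_j` is `(t_i - t_j)^(2-d)`, written so as to cover `d = 1`. -/
noncomputable def parabolaStress (d : ℕ) (t : Fin n → ℝ) (B : ℝ → ℝ[X]) (e : Pair n) : ℝ :=
  (B (t e.val.1)).eval (t e.val.2) *
    (nodalWeight Finset.univ t e.val.1 * nodalWeight Finset.univ t e.val.2) *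
    ((t e.val.1 - t e.val.2) / (t e.val.1 - t e.val.2) ^ (d - 1))

theorem parabolaStress_eq_zero_iff (ht : Function.Injective t) {B : ℝ → ℝ[X]} {e : Pair n} :
    parabolaStress d t B e = 0 ↔ (B (t e.val.1)).eval (t e.val.2) = 0 := by
  have hw : ∀ i, nodalWeight Finset.univ t i ≠ 0 := fun i ↦
    nodalWeight_ne_zero ht.injOn (Finset.mem_univ i)
  simp [parabolaStress, hw, sub_ne_zero_of_pair ht e]

theorem isStress_parabolaStress (ht : Function.Injective t) {B : ℝ → ℝ[X]}
    (hB : ∀ x y, (B x).eval y = (B y).eval x) (hdeg : ∀ x, (B x).natDegree + d + 1 < n) :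
    IsStress d (parabolaPoints t) (parabolaStress d t B) := by
  refine isStress_parabolaPoints_iff.mpr fun v a ha ↦ ?_
  let w := nodalWeight Finset.univ t
  let H : Fin n → Fin n → ℝ := fun i j ↦
    (B (t i)).eval (t j) * (w i * w j) * (t i - t j) * (t i + t j) ^ a
  have hH : ∀ i j, H j i = -H i j := fun i j ↦ by simp only [H, hB (t j)]; ring
  let p : ℝ[X] := B (t v) * (C (t v) - X) * (C (t v) + X) ^ a
  have hp : p.natDegree + 1 < Finset.card (Finset.univ : Finset (Fin n)) := by
    have h : p.natDegree ≤ (B (t v)).natDegree + 1 + a := by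
      unfold p
      compute_degree
    rw [Finset.card_univ, Fintype.card_fin]
    linarith [hdeg (t v)]
  calc _ = ∑ e : Pair n, incidenceSign e v * H e.val.1 e.val.2 := by
        refine Finset.sum_congr rfl fun e _ ↦ ?_
        have := sub_ne_zero_of_pair ht e
        simp only [parabolaStress, H, w]
        field_simp
    _ = ∑ j, H v j := sum_incidenceSign_mul hH v
    _ = w v * ∑ j, p.eval (t j) * w j := by
        rw [Finset.mul_sum]
        refine Finset.sum_congr rfl fun j _ ↦ ?_
        simp only [H, p, eval_mul, eval_pow, eval_add, eval_sub, eval_C, eval_X]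
        ring
    _ = 0 := by rw [sum_eval_mul_nodalWeight_eq_zero ht.injOn hp, mul_zero]

end Parabola

section Octahedron

instance : DecidablePred (· ∈ G15) := fun _ ↦ inferInstanceAs (Decidable (_ ∧ _ ∧ _))

theorem edgeConnected_G15 : EdgeConnected G15 := by
  have hmeet : ∀ e ∈ G15, ∀ f ∈ G15, ∃ g ∈ G15,
      (∃ v, Incident v e ∧ Incident v g) ∧ ∃ v, Incident v g ∧ Incident v f := by decide
  intro e he f hf
  obtain ⟨g, hg, heg, hgf⟩ := hmeet e he f hf
  exact .tail (.single ⟨hg, heg⟩) ⟨hf, hgf⟩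

theorem ncard_incident_G15 (v : Fin 6) : {e ∈ G15 | Incident v e}.ncard = 4 := by
  rw [Set.ncard_eq_toFinset_card']
  revert v
  decide

/-- The symmetric polynomial `α x y + β (x + y) + γ`, as a polynomial in `y`. Its zeros are the
pairs exchanged by an involution of the projective line. -/
noncomputable def involutionForm (α β γ x : ℝ) : ℝ[X] := C (α * x + β) * X + C (β * x + γ)

theorem eval_involutionForm (α β γ x y : ℝ) :
    (involutionForm α β γ x).eval y = x * y * α + (x + y) * β + γ := by
  simp only [involutionForm, eval_add, eval_mul, eval_C, eval_X]
  ring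

theorem eq_zero_of_eval_involutionForm_eq_zero {α β γ x y z : ℝ} (hxy : x ≠ y) (hxz : x ≠ z)
    (hyz : y ≠ z) (h₁ : (involutionForm α β γ x).eval y = 0)
    (h₂ : (involutionForm α β γ x).eval z = 0) (h₃ : (involutionForm α β γ y).eval z = 0) :
    α = 0 ∧ β = 0 ∧ γ = 0 := by
  rw [eval_involutionForm] at h₁ h₂ h₃
  have hx : x * α + β = 0 :=
    mul_left_cancel₀ (sub_ne_zero.mpr hyz) (by linear_combination h₁ - h₂)
  have hz : z * α + β = 0 :=
    mul_left_cancel₀ (sub_ne_zero.mpr hxy) (by linear_combination h₂ - h₃)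
  have hα : α = 0 := mul_left_cancel₀ (sub_ne_zero.mpr hxz) (by linear_combination hx - hz)
  have hβ : β = 0 := by linear_combination hx - x * hα
  exact ⟨hα, hβ, by linear_combination h₁ - x * y * hα - (x + y) * hβ⟩

theorem not_linearIndepOn_G15_of_involutionForm {t : Fin 6 → ℝ} (ht : Function.Injective t)
    {α β γ : ℝ} (h₀ : ¬ (α = 0 ∧ β = 0 ∧ γ = 0))
    (h₀₃ : (involutionForm α β γ (t 0)).eval (t 3) = 0)
    (h₁₄ : (involutionForm α β γ (t 1)).eval (t 4) = 0)
    (h₂₅ : (involutionForm α β γ (t 2)).eval (t 5) = 0) :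
    ¬ LinearIndepOn ℝ (cofRow 3 (parabolaPoints t)) G15 := by
  intro hli
  have hstress : IsStress 3 (parabolaPoints t) (parabolaStress 3 t (involutionForm α β γ)) := by
    refine isStress_parabolaStress ht (fun x y ↦ ?_) fun x ↦ ?_
    · rw [eval_involutionForm, eval_involutionForm]
      ring
    · have : (involutionForm α β γ x).natDegree ≤ 1 := natDegree_linear_le
      lia
  have hsupp : ∀ e ∉ G15, parabolaStress 3 t (involutionForm α β γ) e = 0 := by
    intro e he
    rw [parabolaStress_eq_zero_iff ht]
    have hcases : e.val = (0, 3) ∨ e.val = (1, 4) ∨ e.val = (2, 5) := by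
      simp only [G15, Set.mem_ofPred_eq] at he
      tauto
    rcases hcases with h | h | h <;> simpa only [h]
  have hzero := linearIndepOn_iff_forall_fun.mp hli _ hsupp hstress
  have heval : ∀ i j, i < j → (involutionForm α β γ (t i)).eval (t j) = 0 := fun i j hij ↦
    (parabolaStress_eq_zero_iff ht (e := ⟨(i, j), hij⟩)).mp (congrFun hzero _)
  exact h₀ (eq_zero_of_eval_involutionForm_eq_zero (ht.ne (by decide)) (ht.ne (by decide))
    (ht.ne (by decide)) (heval 0 1 (by decide)) (heval 0 2 (by decide)) (heval 1 2 (by decide)))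

/-- The determinant vanishes exactly when the pairs `{t₀, t₃}`, `{t₁, t₄}`, `{t₂, t₅}` belong to an
involution of the projective line. -/
theorem stmt16_general (t : Fin 6 → ℝ) (ht : Function.Injective t)
    (hdet : !![t 0 * t 3, t 0 + t 3, 1; t 1 * t 4, t 1 + t 4, 1; t 2 * t 5, t 2 + t 5, 1].det = 0) :
    ¬ LinearIndependent ℝ (fun e : G15 => cofRow 3 (parabolaPoints t) e.val) ∧
    ∀ S : Set (Pair 6), S ⊂ G15 →
      LinearIndependent ℝ (fun e : S => cofRow 3 (parabolaPoints t) e.val) := by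
  obtain ⟨u, hu, hker⟩ := Matrix.exists_mulVec_eq_zero_iff.mpr hdet
  refine ⟨not_linearIndepOn_G15_of_involutionForm (α := u 0) (β := u 1) (γ := u 2) ht ?_ ?_ ?_ ?_,
    fun S hS ↦ linearIndepOn_cofRow_parabolaPoints_of_ssubset ht edgeConnected_G15
      (fun v ↦ (ncard_incident_G15 v).le) hS⟩
  · rintro ⟨h₀, h₁, h₂⟩
    exact hu (by ext i; fin_cases i <;> assumption)
  · simpa [eval_involutionForm, Matrix.mulVec, dotProduct, Fin.sum_univ_three] using congrFun hker 0
  · simpa [eval_involutionForm, Matrix.mulVec, dotProduct, Fin.sum_univ_three] using congrFun hker 1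
  · simpa [eval_involutionForm, Matrix.mulVec, dotProduct, Fin.sum_univ_three] using congrFun hker 2

/-- The parameters `(t₁, …, t₆)` of the points `q16` on the parabola. -/
def nodes16 : Fin 6 → ℝ := ![1, 3, 4, 6, 7, 9]

theorem injective_nodes16 : Function.Injective nodes16 := by
  refine StrictMono.injective (Fin.strictMono_iff_lt_succ.mpr fun i ↦ ?_)
  fin_cases i <;> simp [nodes16] <;> norm_num

theorem q16_eq_parabolaPoints : q16 = parabolaPoints nodes16 := by
  ext i <;> fin_cases i <;> norm_num [q16, parabolaPoints, nodes16]

end Octahedron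

/-- For the points `(i, i²)`, `i ∈ {1,3,4,6,7,9}`, the rows of `C₃(q)` indexed
by the octahedron graph form a circuit: they are dependent, but every proper subset is
independent. -/
theorem stmt16 :
    ¬ LinearIndependent ℝ (fun e : G15 => cofRow 3 q16 e.val) ∧
    ∀ S : Set (Pair 6), S ⊂ G15 →
      LinearIndependent ℝ (fun e : S => cofRow 3 q16 e.val) := by
  rw [q16_eq_parabolaPoints]
  refine stmt16_general nodes16 injective_nodes16 ?_
  simp only [nodes16, Matrix.det_fin_three, Matrix.of_apply, Matrix.cons_val]
  norm_num
end
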